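/- arXiv:cs/0702079 — 2 statements merged into one kernel-verified Lean document; each statement's English description precedes it below -/
import Mathlib

section
/- For all integers n ≥ 2 and m ≥ n, there exist vectors v_0, v_1, …, v_n ∈ ℝ² such that the n+1 translates A_i = D_n^m + v_i (0 ≤ i ≤ n) have pairwise disjoint interiors, and A_0 touches every A_i for 1 ≤ i ≤ n, i.e., A_0 ∩ A_i ≠ ∅ for each 1 ≤ i ≤ n. -/
/-- The ruler sequence: `s i = v₂(i) + 1`. -/
def rulerSeq (i : ℕ) : ℕ := padicValNat 2 i + 1

/-- `yCoord i = y_i = ∑_{j=1}^{i-1} s j`. -/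
def yCoord (i : ℕ) : ℕ := ∑ j ∈ Finset.Ico 1 i, rulerSeq j

/-- The `i`-th bar of `D_n^m`: `[(i-1)m, im] × [y_i, y_i + 1]`. -/
def bar (m i : ℕ) : Set (ℝ × ℝ) :=
  Set.Icc (((i : ℝ) - 1) * m) ((i : ℝ) * m) ×ˢ Set.Icc ((yCoord i : ℝ)) ((yCoord i : ℝ) + 1)

/-- The `i`-th connector of `D_n^m`: `[im - 1, im] × [y_i + 1, y_{i+1} + 1]`. -/
def connector (m i : ℕ) : Set (ℝ × ℝ) :=
  Set.Icc ((i : ℝ) * m - 1) ((i : ℝ) * m) ×ˢ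
    Set.Icc ((yCoord i : ℝ) + 1) ((yCoord (i + 1) : ℝ) + 1)

/-- The region `D_n^m`: union of `2^n` bars and `2^n - 1` connectors. -/
def Dregion (n m : ℕ) : Set (ℝ × ℝ) :=
  (⋃ i ∈ Finset.Icc 1 (2 ^ n), bar m i) ∪ ⋃ i ∈ Finset.Icc 1 (2 ^ n - 1), connector m i

/-- Binary digit sum. -/
def popc (k : ℕ) : ℕ := (Nat.digits 2 k).sum

lemma popc_zero : popc 0 = 0 := by simp [popc]

lemma popc_even (k : ℕ) : popc (2 * k) = popc k := by
  rcases Nat.eq_zero_or_pos k with rfl | h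
  · simp
  · unfold popc
    rw [Nat.digits_def' (by norm_num) (by omega)]
    simp

lemma popc_odd (k : ℕ) : popc (2 * k + 1) = popc k + 1 := by
  unfold popc
  rw [Nat.digits_def' (by norm_num) (by omega)]
  have h1 : (2 * k + 1) % 2 = 1 := by omega
  have h2 : (2 * k + 1) / 2 = k := by omega
  rw [h1, h2]
  simp [add_comm]

lemma popc_succ (k : ℕ) : popc (k + 1) + padicValNat 2 (k + 1) = popc k + 1 := by
  induction k using Nat.strong_induction_on with
  | _ k ih =>
    rcases Nat.even_or_odd' k with ⟨t, rfl | rfl⟩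
    · rw [popc_odd, popc_even, padicValNat.eq_zero_of_not_dvd (by omega)]
    · have h := ih t (by omega)
      have e : 2 * t + 1 + 1 = 2 * (t + 1) := by ring
      rw [e, popc_even, popc_odd, padicValNat.mul (by norm_num) (by omega)]
      simp only [padicValNat_self]
      omega

lemma y_popc (u : ℕ) : yCoord (u + 1) + popc u = 2 * u := by
  induction u with
  | zero => simp [yCoord, popc_zero]
  | succ u ih =>
    have h : yCoord (u + 1 + 1) = yCoord (u + 1) + rulerSeq (u + 1) := by
      unfold yCoord
      rw [Finset.sum_Ico_succ_top (by omega)]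
    have h2 := popc_succ u
    rw [h]
    unfold rulerSeq
    omega

lemma y_mono {a b : ℕ} (h : a ≤ b) : yCoord a ≤ yCoord b := by
  unfold yCoord
  exact Finset.sum_le_sum_of_subset (Finset.Ico_subset_Ico le_rfl h)

lemma popc_add (a b : ℕ) : popc (a + b) ≤ popc a + popc b := by
  induction a using Nat.strong_induction_on generalizing b with
  | _ a ih =>
    rcases Nat.eq_zero_or_pos a with rfl | h0
    · simp
    rcases Nat.even_or_odd' a with ⟨t, rfl | rfl⟩ <;>
      rcases Nat.even_or_odd' b with ⟨r, rfl | rfl⟩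
    · have h := ih t (by omega) r
      rw [show 2 * t + 2 * r = 2 * (t + r) by ring, popc_even, popc_even, popc_even]
      exact h
    · have h := ih t (by omega) r
      rw [show 2 * t + (2 * r + 1) = 2 * (t + r) + 1 by ring, popc_even, popc_odd, popc_odd]
      omega
    · have h := ih t (by omega) r
      rw [show 2 * t + 1 + 2 * r = 2 * (t + r) + 1 by ring, popc_even, popc_odd, popc_odd]
      omega
    · have h := ih t (by omega) r
      have h2 := popc_succ (t + r)
      rw [show 2 * t + 1 + (2 * r + 1) = 2 * (t + r + 1) by ring, popc_even, popc_odd, popc_odd]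
      omega

lemma popc_block (i a r : ℕ) (hr : r < 2 ^ i) : popc (2 ^ i * a + r) = popc a + popc r := by
  induction i generalizing r with
  | zero =>
    have : r = 0 := by simpa using hr
    subst this
    simp [popc_zero]
  | succ i ih =>
    rw [pow_succ] at hr
    rcases Nat.even_or_odd' r with ⟨t, rfl | rfl⟩
    · rw [show 2 ^ (i + 1) * a + 2 * t = 2 * (2 ^ i * a + t) by ring, popc_even, popc_even]
      exact ih t (by omega)
    · rw [show 2 ^ (i + 1) * a + (2 * t + 1) = 2 * (2 ^ i * a + t) + 1 by ring, popc_odd, popc_odd,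
        ih t (by omega)]
      ring

lemma popc_ones (i r : ℕ) (h : r + 1 = 2 ^ i) : popc r = i := by
  induction i generalizing r with
  | zero =>
    have : r = 0 := by simpa using h
    subst this
    exact popc_zero
  | succ i ih =>
    rw [pow_succ] at h
    obtain ⟨t, rfl | rfl⟩ := Nat.even_or_odd' r
    · omega
    · rw [popc_odd, ih t (by omega)]

lemma popc_le (i r : ℕ) (h : r < 2 ^ i) : popc r ≤ i := by
  induction i generalizing r with
  | zero =>
    have : r = 0 := by simpa using h
    subst this
    simp [popc_zero]
  | succ i ih =>
    rw [pow_succ] at h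
    obtain ⟨t, rfl | rfl⟩ := Nat.even_or_odd' r
    · have := ih t (by omega)
      rw [popc_even]; omega
    · have := ih t (by omega)
      rw [popc_odd]; omega

lemma popc_lt (i r : ℕ) (h : r + 1 < 2 ^ i) : popc r + 1 ≤ i := by
  induction i generalizing r with
  | zero => simp at h
  | succ i ih =>
    rw [pow_succ] at h
    obtain ⟨t, rfl | rfl⟩ := Nat.even_or_odd' r
    · have := popc_le i t (by omega)
      rw [popc_even]; omega
    · have := ih t (by omega)
      rw [popc_odd]; omega

lemma popc_pos (r : ℕ) (h : 0 < r) : 1 ≤ popc r := by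
  induction r using Nat.strong_induction_on with
  | _ r ih =>
    obtain ⟨t, rfl | rfl⟩ := Nat.even_or_odd' r
    · rw [popc_even]; exact ih t (by omega) (by omega)
    · rw [popc_odd]; omega

lemma popc_top (n i d r : ℕ) (hi : i ≤ n) (hd : d + 2 ^ i = 2 ^ n) (hr : r < 2 ^ i) :
    popc (d + r) + i = n + popc r := by
  obtain ⟨t, rfl⟩ := Nat.exists_eq_add_of_le hi
  have hp : 0 < 2 ^ t := by positivity
  have h1 : popc (2 ^ t - 1) = t := popc_ones t _ (by omega)
  have h2 : d = 2 ^ i * (2 ^ t - 1) := by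
    rw [Nat.mul_sub, ← pow_add]; omega
  rw [h2, popc_block _ _ _ hr, h1]
  ring

lemma mem_lower {n m : ℕ} (hm : 1 ≤ m) {x y : ℝ} (h : (x, y) ∈ Dregion n m) :
    ∃ p : ℕ, p < 2 ^ n ∧ (p : ℝ) * m ≤ x ∧ x ≤ (p + 1 : ℝ) * m ∧ (yCoord (p + 1) : ℝ) ≤ y := by
  have hm' : (1 : ℝ) ≤ m := by exact_mod_cast hm
  unfold Dregion bar connector at h
  simp only [Set.mem_union, Set.mem_iUnion, Finset.mem_Icc, Set.mem_prod, Set.mem_Icc] at h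
  rcases h with ⟨i, ⟨h1, h2⟩, ⟨h3, h4⟩, h5, h6⟩ | ⟨i, ⟨h1, h2⟩, ⟨h3, h4⟩, h5, h6⟩
  · obtain ⟨p, rfl⟩ := Nat.exists_eq_add_of_le' h1
    push_cast at h3 h4
    exact ⟨p, by omega, by linarith, by linarith, h5⟩
  · obtain ⟨p, rfl⟩ := Nat.exists_eq_add_of_le' h1
    push_cast at h3 h4
    exact ⟨p, by omega, by linarith, by linarith, by linarith⟩

lemma mem_upper {n m : ℕ} (hm : 1 ≤ m) {x y : ℝ} (h : (x, y) ∈ Dregion n m) :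
    ∃ q : ℕ, q < 2 ^ n ∧ (q : ℝ) * m - 1 ≤ x ∧ x ≤ (q + 1 : ℝ) * m ∧
      y ≤ (yCoord (q + 1) : ℝ) + 1 := by
  have hm' : (1 : ℝ) ≤ m := by exact_mod_cast hm
  unfold Dregion bar connector at h
  simp only [Set.mem_union, Set.mem_iUnion, Finset.mem_Icc, Set.mem_prod, Set.mem_Icc] at h
  rcases h with ⟨i, ⟨h1, h2⟩, ⟨h3, h4⟩, h5, h6⟩ | ⟨i, ⟨h1, h2⟩, ⟨h3, h4⟩, h5, h6⟩
  · obtain ⟨p, rfl⟩ := Nat.exists_eq_add_of_le' h1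
    push_cast at h3 h4
    exact ⟨p, by omega, by linarith, by linarith, h6⟩
  · exact ⟨i, by omega, by linarith, by linarith, by linarith⟩

lemma key_disj (n m : ℕ) (hm : 1 ≤ m) (jA jB : ℕ) (hA hB eA eB : ℤ) (he : eA + 1 ≤ eB)
    (hd : eB ≤ eA + m) (hj : jA < jB + 2 ^ n)
    (hcol : ∀ p q : ℕ, p < 2 ^ n → q < 2 ^ n → p + jA = q + jB →
      (yCoord (q + 1) : ℤ) + hB + 1 ≤ yCoord (p + 1) + hA) :
    Disjoint (interior ((· + ((jA * m + eA : ℝ), (hA : ℝ))) '' Dregion n m))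
      (interior ((· + ((jB * m + eB : ℝ), (hB : ℝ))) '' Dregion n m)) := by
  rw [Set.disjoint_iff_inter_eq_empty, ← Set.not_nonempty_iff_eq_empty]
  intro hne
  have hdense : Dense ({x : ℝ | Irrational x} ×ˢ {x : ℝ | Irrational x}) :=
    dense_irrational.prod dense_irrational
  obtain ⟨⟨X, Y⟩, ⟨hX1, hX2⟩, hX, hY⟩ :=
    hdense.inter_open_nonempty _ (isOpen_interior.inter isOpen_interior) hne
  simp only [Set.mem_setOf_eq] at hX hY
  obtain ⟨⟨x, y⟩, hD, hxy⟩ := interior_subset hX1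
  obtain ⟨⟨x', y'⟩, hD', hxy'⟩ := interior_subset hX2
  simp only [Prod.mk_add_mk, Prod.mk.injEq] at hxy hxy'
  obtain ⟨rfl, rfl⟩ : x = X - (jA * m + eA) ∧ y = Y - hA := ⟨by linarith, by linarith⟩
  obtain ⟨rfl, rfl⟩ : x' = X - (jB * m + eB) ∧ y' = Y - hB := ⟨by linarith, by linarith⟩
  obtain ⟨p, hp, p1, p2, p3⟩ := mem_lower hm hD
  obtain ⟨q, hq, q1, q2, q3⟩ := mem_upper hm hD'
  have hmZ : (1 : ℤ) ≤ m := by exact_mod_cast hm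
  -- integer inequalities
  have hlt : ∀ a b : ℤ, (a : ℝ) ≤ X → X ≤ (b : ℝ) → a < b := by
    intro a b h1 h2
    have h3 : (a : ℝ) < X := lt_of_le_of_ne h1 (hX.ne_int a).symm
    exact_mod_cast h3.trans_le h2
  have hltY : ∀ a b : ℤ, (a : ℝ) ≤ Y → Y ≤ (b : ℝ) → a < b := by
    intro a b h1 h2
    have h3 : (a : ℝ) < Y := lt_of_le_of_ne h1 (hY.ne_int a).symm
    exact_mod_cast h3.trans_le h2
  have k1 := hlt ((q + jB) * m + eB - 1) ((p + jA + 1) * m + eA)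
    (by push_cast; linarith) (by push_cast; linarith)
  have k2 := hlt ((p + jA) * m + eA) ((q + jB + 1) * m + eB)
    (by push_cast; linarith) (by push_cast; linarith)
  have k3 := hltY (yCoord (p + 1) + hA) (yCoord (q + 1) + 1 + hB)
    (by push_cast; linarith) (by push_cast; linarith)
  have w1 : q + jB ≤ p + jA := by
    by_contra hc
    have : ((p : ℤ) + jA + 1) ≤ q + jB := by omega
    nlinarith
  have w2 : p + jA ≤ q + jB + 1 := by
    by_contra hc
    have : ((q : ℤ) + jB + 2) ≤ p + jA := by omega
    nlinarith
  by_cases c1 : p + jA < jB + 2 ^ n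
  · have h := hcol p (p + jA - jB) hp (by omega) (by omega)
    have h2 : yCoord (q + 1) ≤ yCoord (p + jA - jB + 1) := y_mono (by omega)
    omega
  · by_cases c2 : jA ≤ q + jB
    · have h := hcol (q + jB - jA) q (by omega) hq (by omega)
      have h2 : yCoord (q + jB - jA + 1) ≤ yCoord (p + 1) := y_mono (by omega)
      omega
    · omega

/-- Horizontal shift (in columns) of the `i`-th translate. -/
def jsh (n i : ℕ) : ℕ := if i = 0 then 0 else 2 ^ n - 2 ^ i + 1

/-- Vertical shift of the `i`-th translate. -/
def hsh (n i : ℕ) : ℤ := if i = 0 then 0 else 2 * (jsh n i : ℤ) + 2 * i - n - 1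

lemma col_zero (n i : ℕ) (h0 : 1 ≤ i) (hi : i ≤ n) (p q : ℕ) (hq : q < 2 ^ n)
    (h : p + jsh n i = q) :
    (yCoord (q + 1) : ℤ) + 1 ≤ yCoord (p + 1) + hsh n i := by
  have hpw : 2 ^ i ≤ 2 ^ n := Nat.pow_le_pow_right (by norm_num) hi
  have ep := y_popc p
  have eq := y_popc q
  have hj : jsh n i = 2 ^ n - 2 ^ i + 1 := by simp [jsh, show i ≠ 0 by omega]
  have hh : hsh n i = 2 * (jsh n i : ℤ) + 2 * i - n - 1 := by simp [hsh, show i ≠ 0 by omega]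
  have a1 := popc_top n i (2 ^ n - 2 ^ i) (p + 1) hi (by omega) (by omega)
  rw [show 2 ^ n - 2 ^ i + (p + 1) = q by omega] at a1
  have a2 := popc_pos (p + 1) (by omega)
  have a3 := popc_lt i p (by omega)
  rw [hh]
  omega

lemma col_pos (n i k : ℕ) (h0 : 1 ≤ k) (hk : k < i) (hi : i ≤ n) (p q : ℕ)
    (h : p + jsh n i = q + jsh n k) :
    (yCoord (q + 1) : ℤ) + hsh n k + 1 ≤ yCoord (p + 1) + hsh n i := by
  have hpw : 2 ^ i ≤ 2 ^ n := Nat.pow_le_pow_right (by norm_num) hi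
  have hpw2 : 2 ^ k ≤ 2 ^ i := Nat.pow_le_pow_right (by norm_num) hk.le
  have ep := y_popc p
  have eq := y_popc q
  have hj : jsh n i = 2 ^ n - 2 ^ i + 1 := by simp [jsh, show i ≠ 0 by omega]
  have hh : hsh n i = 2 * (jsh n i : ℤ) + 2 * i - n - 1 := by simp [hsh, show i ≠ 0 by omega]
  have hj' : jsh n k = 2 ^ n - 2 ^ k + 1 := by simp [jsh, show k ≠ 0 by omega]
  have hh' : hsh n k = 2 * (jsh n k : ℤ) + 2 * k - n - 1 := by simp [hsh, show k ≠ 0 by omega]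
  have a1 := popc_top i k (2 ^ i - 2 ^ k) 0 hk.le (by omega) (by positivity)
  rw [popc_zero, Nat.add_zero] at a1
  have a2 := popc_add q (2 ^ i - 2 ^ k)
  rw [show q + (2 ^ i - 2 ^ k) = p by omega] at a2
  rw [hh, hh']
  omega

lemma pair_disj (n m : ℕ) (hn : 2 ≤ n) (hm : n ≤ m) (i k : ℕ) (hk : k < i) (hi : i ≤ n) :
    Disjoint (interior ((· + ((jsh n i * m + (-(i : ℤ) : ℤ) : ℝ), (hsh n i : ℝ))) '' Dregion n m))
      (interior ((· + ((jsh n k * m + (-(k : ℤ) : ℤ) : ℝ), (hsh n k : ℝ))) '' Dregion n m)) := by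
  have hpw : 2 ^ i ≤ 2 ^ n := Nat.pow_le_pow_right (by norm_num) hi
  have hpi : 2 ^ 1 ≤ 2 ^ i := Nat.pow_le_pow_right (by norm_num) (by omega)
  have hj : jsh n i = 2 ^ n - 2 ^ i + 1 := by simp [jsh, show i ≠ 0 by omega]
  apply key_disj n m (by omega) _ _ _ _ _ _ (by omega) (by omega) (by omega)
  intro p q hp hq h
  rcases Nat.eq_zero_or_pos k with rfl | h0
  · have hz : jsh n 0 = 0 := by simp [jsh]
    have hz' : hsh n 0 = 0 := by simp [hsh]
    have := col_zero n i (by omega) hi p q hq (by omega)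
    rw [hz']
    omega
  · exact col_pos n i k h0 hk hi p q h

lemma bar_mem {n m p : ℕ} (hp : p < 2 ^ n) {x y : ℝ} (h1 : (p : ℝ) * m ≤ x)
    (h2 : x ≤ (p + 1 : ℝ) * m) (h3 : (yCoord (p + 1) : ℝ) ≤ y)
    (h4 : y ≤ (yCoord (p + 1) : ℝ) + 1) : (x, y) ∈ Dregion n m := by
  unfold Dregion bar
  left
  simp only [Set.mem_iUnion, Finset.mem_Icc, Set.mem_prod, Set.mem_Icc]
  refine ⟨p + 1, ⟨by omega, by omega⟩, ⟨?_, ?_⟩, h3, h4⟩ <;> push_cast <;> linarith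

lemma pair_touch (n m : ℕ) (hm : n ≤ m) (i : ℕ) (h0 : 1 ≤ i) (hi : i ≤ n) :
    (((· + ((jsh n 0 * m + (-((0 : ℕ) : ℤ) : ℤ) : ℝ), (hsh n 0 : ℝ))) '' Dregion n m) ∩
      ((· + ((jsh n i * m + (-(i : ℤ) : ℤ) : ℝ), (hsh n i : ℝ))) '' Dregion n m)).Nonempty := by
  obtain ⟨t, rfl⟩ := Nat.exists_eq_add_of_le' h0
  have hpw : 2 ^ (t + 1) ≤ 2 ^ n := Nat.pow_le_pow_right (by norm_num) hi
  have hps : 2 ^ (t + 1) = 2 ^ t * 2 := pow_succ _ _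
  have htp : 0 < 2 ^ t := by positivity
  have hj : jsh n (t + 1) = 2 ^ n - 2 ^ (t + 1) + 1 := by simp [jsh]
  have hh : hsh n (t + 1) = 2 * (jsh n (t + 1) : ℤ) + 2 * (t + 1 : ℕ) - n - 1 := by simp [hsh]
  have hz : jsh n 0 = 0 := by simp [jsh]
  have hz' : hsh n 0 = 0 := by simp [hsh]
  obtain ⟨p, hp⟩ : ∃ p, p + 1 = 2 ^ t := ⟨2 ^ t - 1, by omega⟩
  obtain ⟨u, hu⟩ : ∃ u, u = p + jsh n (t + 1) := ⟨_, rfl⟩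
  have ep := y_popc p
  have eu := y_popc u
  have b1 := popc_ones t p hp
  have b2 := popc_top n t u 0 (by omega) (by omega) htp
  rw [popc_zero, Nat.add_zero] at b2
  have hY : (yCoord (u + 1) : ℤ) + 1 = yCoord (p + 1) + hsh n (t + 1) := by
    rw [hh]; omega
  have hYR : (yCoord (u + 1) : ℝ) + 1 = yCoord (p + 1) + hsh n (t + 1) := by exact_mod_cast hY
  have huR : (u : ℝ) = p + jsh n (t + 1) := by exact_mod_cast hu
  have hmR : (t : ℝ) + 1 ≤ m := by exact_mod_cast hi.trans hm
  have htR : (0 : ℝ) ≤ t := by positivity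
  refine ⟨((u : ℝ) * m, (yCoord (u + 1) : ℝ) + 1), ?_, ?_⟩
  · refine ⟨((u : ℝ) * m, (yCoord (u + 1) : ℝ) + 1), bar_mem (p := u) (by omega) le_rfl ?_ ?_ ?_, ?_⟩
    · nlinarith
    · linarith
    · linarith
    · simp [hz, hz']
  · refine ⟨((p : ℝ) * m + (t + 1), (yCoord (p + 1) : ℝ)),
      bar_mem (p := p) (by omega) ?_ ?_ ?_ ?_, ?_⟩
    · linarith
    · linarith
    · linarith
    · linarith
    · simp only [Prod.mk_add_mk, Prod.mk.injEq]
      refine ⟨?_, hYR.symm⟩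
      rw [huR]
      push_cast
      ring

theorem hadwiger_unbounded_construction (n m : ℕ) (hn : 2 ≤ n) (hm : n ≤ m) :
    ∃ v : Fin (n + 1) → ℝ × ℝ,
      (∀ i j : Fin (n + 1), i ≠ j →
        Disjoint (interior ((· + v i) '' Dregion n m))
          (interior ((· + v j) '' Dregion n m))) ∧
      (∀ i : Fin (n + 1), i ≠ 0 →
        (((· + v 0) '' Dregion n m) ∩ ((· + v i) '' Dregion n m)).Nonempty) := by
  refine ⟨fun i => ((jsh n i * m + (-((i : ℕ) : ℤ) : ℤ) : ℝ), (hsh n i : ℝ)), ?_, ?_⟩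
  · intro i j hij
    have hi := i.2
    have hj := j.2
    rcases lt_or_gt_of_ne (fun h => hij (Fin.ext h) : (i : ℕ) ≠ j) with h | h
    · exact (pair_disj n m hn hm j i h (by omega)).symm
    · exact pair_disj n m hn hm i j h (by omega)
  · intro i hi
    have h2 := i.2
    have h0 : (i : ℕ) ≠ 0 := fun h => hi (Fin.ext h)
    exact pair_touch n m hm i (by omega) (by omega)
end

section
/- For every n > 0 there exist a compact set A_0 ⊆ ℝ² that is homeomorphic (as a subspace of ℝ²) to the closed unit disk {x ∈ ℝ² : ‖x‖ ≤ 1}, and vectors v_1, …, v_n ∈ ℝ², such that the sets A_0, A_1 = A_0 + v_1, …, A_n = A_0 + v_n have pairwise disjoint interiors, while A_0 ∩ A_i ≠ ∅ for every 1 ≤ i ≤ n. Consequently, the Hadwiger number of planar topological disks is not bounded by any constant. -/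
namespace Hadw

abbrev E := EuclideanSpace ℝ (Fin 2)

/-- The vertical shear by a continuous function. -/
noncomputable def shear (f : ℝ → ℝ) (hf : Continuous f) : E ≃ₜ E where
  toFun p := !₂[p 0, p 1 + f (p 0)]
  invFun p := !₂[p 0, p 1 - f (p 0)]
  left_inv p := by ext k; fin_cases k <;> simp
  right_inv p := by ext k; fin_cases k <;> simp
  continuous_toFun := by
    refine (PiLp.continuous_toLp 2 _).comp (continuous_pi fun k => ?_)
    fin_cases k <;> simp <;> fun_prop
  continuous_invFun := by
    refine (PiLp.continuous_toLp 2 _).comp (continuous_pi fun k => ?_)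
    fin_cases k <;> simp <;> fun_prop

def rect (L : ℝ) : Set E := {p | (0 ≤ p 0 ∧ p 0 ≤ L) ∧ 0 ≤ p 1 ∧ p 1 ≤ 1}

def band (f : ℝ → ℝ) (L : ℝ) : Set E :=
  {p | (0 ≤ p 0 ∧ p 0 ≤ L) ∧ f (p 0) ≤ p 1 ∧ p 1 ≤ f (p 0) + 1}

lemma rect_compact (L : ℝ) : IsCompact (rect L) := by
  have h : rect L = (WithLp.toLp 2) '' (Set.Icc (![0, 0] : Fin 2 → ℝ) ![L, 1]) := by
    ext p
    constructor
    · rintro ⟨⟨h1, h2⟩, h3, h4⟩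
      refine ⟨WithLp.ofLp p, ⟨?_, ?_⟩, rfl⟩ <;> intro k <;> fin_cases k <;> simpa
    · rintro ⟨q, ⟨h1, h2⟩, rfl⟩
      have a := h1 0
      have b := h1 1
      have c := h2 0
      have d := h2 1
      simp at a b c d
      exact ⟨⟨a, c⟩, b, d⟩
  rw [h]
  exact isCompact_Icc.image (PiLp.continuous_toLp 2 _)

lemma rect_convex (L : ℝ) : Convex ℝ (rect L) := by
  rintro p ⟨⟨h1, h2⟩, h3, h4⟩ q ⟨⟨g1, g2⟩, g3, g4⟩ a b ha hb hab
  have hb' : b = 1 - a := by linarith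
  subst hb'
  simp only [rect, Set.mem_ofPred_eq, PiLp.add_apply, PiLp.smul_apply, smul_eq_mul]
  refine ⟨⟨?_, ?_⟩, ?_, ?_⟩ <;> nlinarith

lemma rect_interior (L : ℝ) (hL : 0 < L) : (interior (rect L)).Nonempty := by
  have ho : IsOpen {p : E | (0 < p 0 ∧ p 0 < L) ∧ 0 < p 1 ∧ p 1 < 1} := by
    have h0 : Continuous fun p : E => p 0 := by fun_prop
    have h1 : Continuous fun p : E => p 1 := by fun_prop
    exact ((isOpen_lt continuous_const h0).inter (isOpen_lt h0 continuous_const)).inter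
      ((isOpen_lt continuous_const h1).inter (isOpen_lt h1 continuous_const))
  refine ⟨!₂[L / 2, 1 / 2], interior_maximal ?_ ho ?_⟩
  · rintro p ⟨⟨h1, h2⟩, h3, h4⟩
    exact ⟨⟨h1.le, h2.le⟩, h3.le, h4.le⟩
  · simp only [Set.mem_ofPred_eq]
    norm_num
    linarith

lemma band_eq (f : ℝ → ℝ) (hf : Continuous f) (L : ℝ) :
    band f L = shear f hf '' rect L := by
  ext p
  constructor
  · rintro ⟨⟨h1, h2⟩, h3, h4⟩
    refine ⟨(shear f hf).symm p, ⟨⟨h1, h2⟩, ?_, ?_⟩, by simp⟩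
    · change 0 ≤ p 1 - f (p 0)
      linarith
    · change p 1 - f (p 0) ≤ 1
      linarith
  · rintro ⟨q, ⟨⟨h1, h2⟩, h3, h4⟩, rfl⟩
    refine ⟨⟨h1, h2⟩, ?_, ?_⟩
    · change f (q 0) ≤ q 1 + f (q 0)
      linarith
    · change q 1 + f (q 0) ≤ f (q 0) + 1
      linarith

lemma band_compact (f : ℝ → ℝ) (hf : Continuous f) (L : ℝ) : IsCompact (band f L) := by
  rw [band_eq f hf]
  exact (rect_compact L).image (shear f hf).continuous

lemma band_disk (f : ℝ → ℝ) (hf : Continuous f) (L : ℝ) (hL : 0 < L) :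
    Nonempty (band f L ≃ₜ ({x : E | ‖x‖ ≤ 1} : Set E)) := by
  obtain ⟨h, -, h2, -⟩ := exists_homeomorph_image_interior_closure_frontier_eq_unitBall
    (rect_convex L) (rect_interior L hL) (rect_compact L).isBounded
  rw [(rect_compact L).isClosed.closure_eq] at h2
  have e : ({x : E | ‖x‖ ≤ 1} : Set E) = h '' rect L := by
    rw [h2]; ext x; simp
  rw [e, band_eq f hf]
  exact ⟨((shear f hf).image (rect L)).symm.trans (h.image (rect L))⟩

lemma mem_translate (f : ℝ → ℝ) (L : ℝ) (v p : E) :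
    p ∈ (· + v) '' band f L ↔ (0 ≤ p 0 - v 0 ∧ p 0 - v 0 ≤ L) ∧
      f (p 0 - v 0) + v 1 ≤ p 1 ∧ p 1 ≤ f (p 0 - v 0) + v 1 + 1 := by
  constructor
  · rintro ⟨q, ⟨⟨h1, h2⟩, h3, h4⟩, rfl⟩
    simp only [PiLp.add_apply, add_sub_cancel_right]
    refine ⟨⟨h1, h2⟩, ?_, ?_⟩ <;> linarith
  · rintro ⟨⟨h1, h2⟩, h3, h4⟩
    refine ⟨p - v, ⟨⟨h1, h2⟩, ?_, ?_⟩, by simp⟩ <;> simp only [PiLp.sub_apply] <;> linarith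

/-- If `A` lies below `B` on vertical lines, the interiors are disjoint. -/
lemma disjoint_of_below (A B : Set E)
    (h : ∀ p ∈ A, ∀ q ∈ B, p 0 = q 0 → p 1 ≤ q 1) :
    Disjoint (interior A) (interior B) := by
  rw [Set.disjoint_left]
  intro p hA hB
  have hc : Continuous fun r : ℝ => p + r • (!₂[0, 1] : E) := by fun_prop
  have hev : ∀ᶠ r in nhds (0 : ℝ), p + r • (!₂[0, 1] : E) ∈ interior A := by
    apply hc.continuousAt.eventually_mem
    apply isOpen_interior.mem_nhds
    simpa using hA
  obtain ⟨ε, hε, hb⟩ := Metric.eventually_nhds_iff.1 hev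
  have hm := hb (y := ε / 2) (by rw [Real.dist_eq, sub_zero, abs_of_pos] <;> linarith)
  have := h _ (interior_subset hm) _ (interior_subset hB) (by simp)
  simp at this
  linarith

noncomputable def tent (n : ℕ) (l : ℕ) (s : ℝ) : ℝ :=
  max 0 (2 * l - |s - 4 * n * (6 * n + 1) ^ l| / (6 * n + 1) ^ l)

lemma tent_cont (n l : ℕ) : Continuous (tent n l) := by
  unfold tent; fun_prop

lemma tent_nonneg (n l : ℕ) (s : ℝ) : 0 ≤ tent n l s := le_max_left _ _

lemma cpos (n l : ℕ) : (0 : ℝ) < (6 * n + 1) ^ l := by positivity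

lemma tent_le (n l : ℕ) (s : ℝ) : tent n l s ≤ 2 * l := by
  unfold tent
  have := cpos n l
  have : 0 ≤ |s - 4 * n * (6 * n + 1) ^ l| / (6 * (n : ℝ) + 1) ^ l := by positivity
  apply max_le <;> [positivity; linarith]

lemma tent_peak (n l : ℕ) : tent n l (4 * n * (6 * n + 1) ^ l) = 2 * l := by
  simp [tent]

lemma tent_zero (n l : ℕ) (hl : l < n) (s : ℝ)
    (h : s ≤ 2 * n * (6 * n + 1) ^ l ∨ 6 * n * (6 * n + 1) ^ l ≤ s) : tent n l s = 0 := by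
  unfold tent
  apply max_eq_left
  have hc := cpos n l
  have hl' : (l : ℝ) ≤ n := by exact_mod_cast hl.le
  have : 2 * (l : ℝ) ≤ |s - 4 * n * (6 * n + 1) ^ l| / (6 * n + 1) ^ l := by
    rw [le_div_iff₀ hc]
    have h1 : 2 * (l : ℝ) * (6 * n + 1) ^ l ≤ 2 * n * (6 * n + 1) ^ l := by gcongr
    rcases h with h | h
    · have := neg_abs_le (s - 4 * n * (6 * (n : ℝ) + 1) ^ l)
      linarith
    · have := le_abs_self (s - 4 * n * (6 * (n : ℝ) + 1) ^ l)
      linarith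
  linarith

lemma tent_lip (n l : ℕ) (s d : ℝ) (hd : 0 ≤ d) (h : d ≤ (6 * n + 1) ^ l) :
    tent n l s ≤ tent n l (s - d) + 1 := by
  have hc := cpos n l
  unfold tent
  have h1 : |s - d - 4 * n * (6 * (n : ℝ) + 1) ^ l| ≤
      |s - 4 * n * (6 * (n : ℝ) + 1) ^ l| + (6 * n + 1) ^ l := by
    have := abs_sub (s - 4 * n * (6 * (n : ℝ) + 1) ^ l) d
    rw [abs_of_nonneg hd] at this
    rw [show s - d - 4 * n * (6 * (n : ℝ) + 1) ^ l = s - 4 * n * (6 * (n : ℝ) + 1) ^ l - d by ring]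
    linarith
  have h2 : |s - d - 4 * n * (6 * (n : ℝ) + 1) ^ l| / (6 * n + 1) ^ l ≤
      |s - 4 * n * (6 * (n : ℝ) + 1) ^ l| / (6 * n + 1) ^ l + 1 := by
    rw [div_add_one hc.ne']
    gcongr
  apply max_le
  · have := le_max_left 0 (2 * (l : ℝ) - |s - d - 4 * n * (6 * (n : ℝ) + 1) ^ l| / (6 * n + 1) ^ l)
    linarith
  · have := le_max_right 0 (2 * (l : ℝ) - |s - d - 4 * n * (6 * (n : ℝ) + 1) ^ l| / (6 * n + 1) ^ l)
    linarith

/-- The maximum of all tents. -/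
noncomputable def phi (n : ℕ) (hn : 0 < n) (s : ℝ) : ℝ :=
  (Finset.range n).sup' ⟨0, Finset.mem_range.2 hn⟩ (fun l => tent n l s)

lemma phi_cont (n : ℕ) (hn : 0 < n) : Continuous (phi n hn) := by
  unfold phi
  exact Continuous.finset_sup'_apply _ fun l _ => tent_cont n l

lemma le_phi (n : ℕ) (hn : 0 < n) (l : ℕ) (hl : l < n) (s : ℝ) : tent n l s ≤ phi n hn s :=
  Finset.le_sup' (fun l => tent n l s) (Finset.mem_range.2 hl)

lemma phi_le (n : ℕ) (hn : 0 < n) (s B : ℝ) (h : ∀ l < n, tent n l s ≤ B) : phi n hn s ≤ B :=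
  Finset.sup'_le _ _ fun l hl => h l (Finset.mem_range.1 hl)

lemma phi_nonneg (n : ℕ) (hn : 0 < n) (s : ℝ) : 0 ≤ phi n hn s :=
  (tent_nonneg n 0 s).trans (le_phi n hn 0 hn s)

lemma cmono (n : ℕ) {i j : ℕ} (h : i ≤ j) : (6 * (n : ℝ) + 1) ^ i ≤ (6 * n + 1) ^ j :=
  pow_le_pow_right₀ (by linarith [(Nat.cast_nonneg n : (0 : ℝ) ≤ n)]) h

lemma phi_le_h (n : ℕ) (hn : 0 < n) (i : ℕ) (s : ℝ) (hs : s ≤ (6 * n + 1) ^ (i + 1)) :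
    phi n hn s ≤ 2 * i := by
  apply phi_le
  intro l hl
  rcases le_or_gt l i with h | h
  · have : (l : ℝ) ≤ i := by exact_mod_cast h
    linarith [tent_le n l s]
  · rw [tent_zero n l hl s]
    · positivity
    · left
      have h1 := cmono n (show i + 1 ≤ l from h)
      have h2 : (1 : ℝ) ≤ n := by exact_mod_cast hn
      have := cpos n l
      nlinarith

lemma phi_zero (n : ℕ) (hn : 0 < n) (s : ℝ) (hs : (6 * n + 1) ^ n ≤ s) : phi n hn s = 0 := by
  apply le_antisymm _ (phi_nonneg n hn s)
  apply phi_le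
  intro l hl
  rw [tent_zero n l hl s]
  right
  have h1 := cmono n (show l + 1 ≤ n from hl)
  have := cpos n l
  rw [pow_succ] at h1
  linarith

lemma phi_peak (n : ℕ) (hn : 0 < n) (i : ℕ) (hi : i < n) :
    phi n hn (4 * n * (6 * n + 1) ^ i) = 2 * i := by
  apply le_antisymm
  · apply phi_le_h
    have := cpos n i
    rw [pow_succ]
    have : (0 : ℝ) ≤ n := by positivity
    nlinarith
  · rw [← tent_peak n i]
    exact le_phi n hn i hi _

lemma phi_incr (n : ℕ) (hn : 0 < n) (i j : ℕ) (hij : j < i) (u : ℝ)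
    (hu : (6 * (n : ℝ) + 1) ^ (i + 1) - (6 * n + 1) ^ (j + 1) ≤ u) :
    phi n hn u ≤ phi n hn (u - ((6 * (n : ℝ) + 1) ^ (i + 1) - (6 * n + 1) ^ (j + 1))) + 1 := by
  apply phi_le
  intro l hl
  rcases le_or_gt l i with h | h
  · rw [tent_zero n l hl u]
    · linarith [phi_nonneg n hn (u - ((6 * (n : ℝ) + 1) ^ (i + 1) - (6 * n + 1) ^ (j + 1)))]
    · right
      have h1 := cmono n (show j + 1 ≤ i from hij)
      have h2 := cmono n h
      have : (0 : ℝ) ≤ n := by positivity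
      rw [pow_succ _ i] at hu
      nlinarith
  · have h1 := cmono n (show i + 1 ≤ l from h)
    have h2 := cmono n (show j + 1 ≤ i + 1 by omega)
    have h3 := cpos n (j + 1)
    refine (tent_lip n l u ((6 * (n : ℝ) + 1) ^ (i + 1) - (6 * n + 1) ^ (j + 1)) (by linarith) (by linarith)).trans ?_
    gcongr
    exact le_phi n hn l hl _

end Hadw

open Hadw in
theorem hadwiger_number_of_topological_disks_unbounded (n : ℕ) (hn : 0 < n) :
    ∃ (A₀ : Set (EuclideanSpace ℝ (Fin 2))) (v : Fin n → EuclideanSpace ℝ (Fin 2)),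
      IsCompact A₀ ∧
      Nonempty (A₀ ≃ₜ ({x : EuclideanSpace ℝ (Fin 2) | ‖x‖ ≤ 1} : Set _)) ∧
      (∀ i : Fin n, Disjoint (interior A₀) (interior ((· + v i) '' A₀))) ∧
      (∀ i j : Fin n, i ≠ j →
        Disjoint (interior ((· + v i) '' A₀)) (interior ((· + v j) '' A₀))) ∧
      (∀ i : Fin n, (A₀ ∩ ((· + v i) '' A₀)).Nonempty) := by
  have hL := cpos n n
  set L : ℝ := 2 * (6 * n + 1) ^ n with hLdef
  have hL0 : 0 < L := by linarith
  let v : Fin n → E := fun i => !₂[(6 * (n : ℝ) + 1) ^ (i.1 + 1) - L, 2 * (i.1 : ℝ) + 1]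
  have hv0 : ∀ i, v i 0 = (6 * (n : ℝ) + 1) ^ (i.1 + 1) - L := fun i => rfl
  have hv1 : ∀ i, v i 1 = 2 * (i.1 : ℝ) + 1 := fun i => rfl
  have key : ∀ i j : Fin n, j < i → Disjoint (interior ((· + v j) '' band (phi n hn) L))
      (interior ((· + v i) '' band (phi n hn) L)) := by
    intro i j hij
    apply disjoint_of_below
    intro p hp q hq hpq
    rw [mem_translate, hv0, hv1] at hp hq
    obtain ⟨⟨a1, a2⟩, a3, a4⟩ := hp
    obtain ⟨⟨b1, b2⟩, b3, b4⟩ := hq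
    have := phi_incr n hn i j hij (p 0 - ((6 * (n : ℝ) + 1) ^ (j.1 + 1) - L)) (by
      rw [hpq]; linarith)
    rw [show p 0 - ((6 * (n : ℝ) + 1) ^ (j.1 + 1) - L) -
      ((6 * (n : ℝ) + 1) ^ (i.1 + 1) - (6 * n + 1) ^ (j.1 + 1)) =
      q 0 - ((6 * (n : ℝ) + 1) ^ (i.1 + 1) - L) by rw [hpq]; ring] at this
    have hji : (j.1 : ℝ) + 1 ≤ i.1 := by exact_mod_cast hij
    linarith
  refine ⟨band (phi n hn) L, v, band_compact _ (phi_cont n hn) L,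
    band_disk _ (phi_cont n hn) L hL0, ?_, ?_, ?_⟩
  · intro i
    apply disjoint_of_below
    rintro p ⟨⟨a1, a2⟩, a3, a4⟩ q hq hpq
    rw [mem_translate, hv0, hv1] at hq
    obtain ⟨⟨b1, b2⟩, b3, b4⟩ := hq
    have h1 := phi_le_h n hn i (p 0) (by rw [hpq]; linarith)
    have h2 := phi_nonneg n hn (q 0 - ((6 * (n : ℝ) + 1) ^ (i.1 + 1) - L))
    linarith
  · intro i j hij
    rcases lt_or_gt_of_ne hij with h | h
    · exact key j i h
    · exact (key i j h).symm
  · intro i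
    have hc := cpos n i
    have hn' : (0 : ℝ) ≤ n := by positivity
    have hm := cmono n (show i.1 + 1 ≤ n from i.2)
    have hs : 4 * n * (6 * (n : ℝ) + 1) ^ i.1 ≤ (6 * n + 1) ^ (i.1 + 1) := by
      rw [pow_succ]; nlinarith
    have hs0 : 0 ≤ 4 * n * (6 * (n : ℝ) + 1) ^ i.1 := by positivity
    refine ⟨!₂[4 * n * (6 * (n : ℝ) + 1) ^ i.1, 2 * (i.1 : ℝ) + 1], ?_, ?_⟩
    · have hp := phi_peak n hn i i.2
      simp only [band, Set.mem_ofPred_eq]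
      refine ⟨⟨hs0, ?_⟩, ?_, ?_⟩
      · change 4 * n * (6 * (n : ℝ) + 1) ^ i.1 ≤ L
        linarith
      · change phi n hn (4 * n * (6 * (n : ℝ) + 1) ^ i.1) ≤ 2 * (i.1 : ℝ) + 1
        linarith
      · change 2 * (i.1 : ℝ) + 1 ≤ phi n hn (4 * n * (6 * (n : ℝ) + 1) ^ i.1) + 1
        linarith
    · rw [mem_translate, hv0, hv1]
      change (0 ≤ 4 * n * (6 * (n : ℝ) + 1) ^ i.1 - ((6 * (n : ℝ) + 1) ^ (i.1 + 1) - L) ∧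
        4 * n * (6 * (n : ℝ) + 1) ^ i.1 - ((6 * (n : ℝ) + 1) ^ (i.1 + 1) - L) ≤ L) ∧
        phi n hn (4 * n * (6 * (n : ℝ) + 1) ^ i.1 - ((6 * (n : ℝ) + 1) ^ (i.1 + 1) - L)) +
          (2 * (i.1 : ℝ) + 1) ≤ 2 * (i.1 : ℝ) + 1 ∧ 2 * (i.1 : ℝ) + 1 ≤
        phi n hn (4 * n * (6 * (n : ℝ) + 1) ^ i.1 - ((6 * (n : ℝ) + 1) ^ (i.1 + 1) - L)) +
          (2 * (i.1 : ℝ) + 1) + 1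
      rw [phi_zero n hn _ (by linarith)]
      refine ⟨⟨?_, ?_⟩, ?_, ?_⟩ <;> linarith
end
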